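/- arXiv:1910.05022 — 2 statements merged into one kernel-verified Lean document; each statement's English description precedes it below -/
import Mathlib

section
/- The coefficient matrices of the sl(2) Knizhnik–Zamolodchikov connection satisfy the infinitesimal pure braid relations: with H = (ℂ²)^{⊗d} and Ω_{ij} = Σ_{ℓ=1}^{3} s_ℓ^{(i)} ∘ s_ℓ^{(j)} as below, the family B_{ij} = Ω_{ij} satisfies [Ω_{ij}, Ω_{ik} + Ω_{jk}] = 0 and [Ω_{ij} + Ω_{ik}, Ω_{jk}] = 0 for all 1 ≤ i < j < k ≤ d, and [Ω_{ij}, Ω_{kl}] = 0 whenever i, j, k, l are pairwise distinct. Consequently the Knizhnik–Zamolodchikov connection d − λ Σ_{i<j} Ω_{ij} d(w_i − w_j)/(w_i − w_j) is flat for every λ ∈ ℂ. -/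
/-- The Pauli matrices `σ₁, σ₂, σ₃`. -/
noncomputable def pauli : Fin 3 → Matrix (Fin 2) (Fin 2) ℂ
  | 0 => !![0, 1; 1, 0]
  | 1 => !![0, -Complex.I; Complex.I, 0]
  | 2 => !![1, 0; 0, -1]

/-- The spin operator `s_ℓ^{(a)}` on `H = (ℂ²)^{⊗d}` (realized concretely as the space of
functions `(Fin d → Fin 2) → ℂ`, with operators written as matrices): it acts as `(1/2)σ_ℓ`
on the `a`-th tensor factor and as the identity on all other factors. -/
noncomputable def spinOp (d : ℕ) (ℓ : Fin 3) (a : Fin d) :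
    Matrix (Fin d → Fin 2) (Fin d → Fin 2) ℂ :=
  Matrix.of fun x y =>
    (1 / 2 : ℂ) * pauli ℓ (x a) (y a) *
      ∏ b ∈ Finset.univ.erase a, (if x b = y b then 1 else 0)

/-- The Knizhnik–Zamolodchikov coefficient operator `Ω_{ij} = ∑_ℓ s_ℓ^{(i)} ∘ s_ℓ^{(j)}`. -/
noncomputable def omegaOp (d : ℕ) (i j : Fin d) :
    Matrix (Fin d → Fin 2) (Fin d → Fin 2) ℂ :=
  ∑ ℓ : Fin 3, spinOp d ℓ i * spinOp d ℓ j

/-- The total spin operator `L_ℓ = ∑_a s_ℓ^{(a)}`. -/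
noncomputable def totalSpin (d : ℕ) (ℓ : Fin 3) :
    Matrix (Fin d → Fin 2) (Fin d → Fin 2) ℂ :=
  ∑ a : Fin d, spinOp d ℓ a

/-- The total spin Casimir `L² = L₁² + L₂² + L₃²`. -/
noncomputable def totalSpinSq (d : ℕ) :
    Matrix (Fin d → Fin 2) (Fin d → Fin 2) ℂ :=
  ∑ ℓ : Fin 3, totalSpin d ℓ * totalSpin d ℓ

/-!
Each `Ω i j` is the split Casimir of the spin representations at the sites `i` and `j`. Since the
structure constants of `sl₂` in the basis `s_ℓ` are totally antisymmetric, `Ω i j` commutes with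
every diagonal spin `s_m^{(i)} + s_m^{(j)}`, and `Ω i k + Ω j k` is built from these diagonal spins
and from spins at the site `k`.

For flatness, partial fractions turn the braid relations into the classical Yang–Baxter equation
for `r i j = (w i - w j)⁻¹ • Ω i j`. Hence the Gaudin Hamiltonians `∑ k ≠ i, r i k` commute, and
the connection form evaluated at a tangent vector `u` is their combination with coefficients `u i`.
-/

section GaudinHamiltonian

variable {ι M : Type*} [Fintype ι]

/-- The Gaudin Hamiltonian `∑ k ≠ i, r i k` at the site `i`. These commute when `r` solves the
classical Yang–Baxter equation, and span the values of the connection form. -/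
def gaudinHamiltonian [AddCommMonoid M] [DecidableEq ι] (r : ι → ι → M) (i : ι) : M :=
  ∑ k ∈ {i}ᶜ, r i k

theorem gaudinHamiltonian_eq_add_sum [AddCommMonoid M] [DecidableEq ι] (r : ι → ι → M)
    {i j : ι} (hij : i ≠ j) : gaudinHamiltonian r i = r i j + ∑ k ∈ {i, j}ᶜ, r i k := by
  have hj : j ∈ ({i}ᶜ : Finset ι) := by simpa using hij.symm
  rw [Finset.pair_comm, Finset.compl_insert, Finset.add_sum_erase _ _ hj, gaudinHamiltonian]

theorem sum_sub_smul_eq_sum_smul_gaudinHamiltonian [LinearOrder ι] [LocallyFiniteOrderTop ι]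
    [LocallyFiniteOrderBot ι] {R : Type*} [Ring R] [AddCommGroup M] [Module R M] {r : ι → ι → M}
    (hr : ∀ ⦃i j⦄, i ≠ j → r j i = -r i j) (u : ι → R) :
    ∑ p : ι × ι with p.1 < p.2, (u p.1 - u p.2) • r p.1 p.2 =
      ∑ i, u i • gaudinHamiltonian r i := by
  have sub_smul_eq {i j : ι} (hij : i < j) :
      (u i - u j) • r i j = u i • r i j + u j • r j i := by
    rw [hr hij.ne, sub_smul, smul_neg, sub_eq_add_neg]
  calc ∑ p : ι × ι with p.1 < p.2, (u p.1 - u p.2) • r p.1 p.2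
      = ∑ i, ∑ j ∈ Finset.Ioi i, (u i - u j) • r i j :=
        Finset.sum_finset_product' _ _ _ (fun p => by simp) (f := fun i j => (u i - u j) • r i j)
    _ = ∑ i, ∑ j ∈ Finset.Ioi i, (u i • r i j + u j • r j i) :=
        Finset.sum_congr rfl fun i _ => Finset.sum_congr rfl fun j hj =>
          sub_smul_eq (Finset.mem_Ioi.1 hj)
    _ = ∑ i, u i • gaudinHamiltonian r i := by
        rw [Finset.sum_sum_Ioi_add_eq_sum_sum_off_diag fun j i => u i • r i j]
        simp only [gaudinHamiltonian, Finset.smul_sum]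

end GaudinHamiltonian

section LieRing

variable {ι L : Type*} [LieRing L]

/-- The infinitesimal pure braid (Drinfeld–Kohno) relations for a family `B i j` of elements of a
Lie ring. The diagonal entries `B i i` are unconstrained. -/
structure IsInfinitesimalPureBraid (B : ι → ι → L) : Prop where
  symm : ∀ ⦃i j⦄, i ≠ j → B i j = B j i
  lie_add_eq_zero : ∀ ⦃i j k⦄, i ≠ j → i ≠ k → j ≠ k → ⁅B i j, B i k + B j k⁆ = 0
  lie_eq_zero_of_disjoint : ∀ ⦃i j k l⦄, i ≠ j → i ≠ k → i ≠ l → j ≠ k → j ≠ l → k ≠ l →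
    ⁅B i j, B k l⁆ = 0

/-- A skew-symmetric solution of the classical Yang–Baxter equation, as a family `r i j` of elements
of a Lie ring in which disjoint pairs of indices commute. The diagonal entries `r i i` are
unconstrained. -/
structure IsClassicalRMatrix (r : ι → ι → L) : Prop where
  skew : ∀ ⦃i j⦄, i ≠ j → r j i = -r i j
  lie_eq_zero_of_disjoint : ∀ ⦃i j k l⦄, i ≠ j → i ≠ k → i ≠ l → j ≠ k → j ≠ l → k ≠ l →
    ⁅r i j, r k l⁆ = 0
  yangBaxter : ∀ ⦃i j k⦄, i ≠ j → i ≠ k → j ≠ k →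
    ⁅r i j, r i k⁆ + ⁅r i j, r j k⁆ + ⁅r i k, r j k⁆ = 0

theorem sum_lie_sum_eq_sum_lie_of_pairwise {κ : Type*} (s : Finset κ) (f g : κ → L)
    (h : ∀ k ∈ s, ∀ l ∈ s, k ≠ l → ⁅f k, g l⁆ = 0) :
    ⁅∑ k ∈ s, f k, ∑ l ∈ s, g l⁆ = ∑ k ∈ s, ⁅f k, g k⁆ := by
  rw [sum_lie_sum]
  exact Finset.sum_congr rfl fun k hk =>
    Finset.sum_eq_single_of_mem k hk fun l hl hlk => h k hk l hl hlk.symm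

namespace IsInfinitesimalPureBraid

variable {B : ι → ι → L} {i j k : ι}

theorem add_lie_eq_zero (hB : IsInfinitesimalPureBraid B) (hij : i ≠ j) (hik : i ≠ k)
    (hjk : j ≠ k) : ⁅B i j + B i k, B j k⁆ = 0 := by
  rw [hB.symm hij, hB.symm hik, ← lie_skew, hB.lie_add_eq_zero hjk hij.symm hik.symm, neg_zero]

theorem lie_left_eq_neg (hB : IsInfinitesimalPureBraid B) (hij : i ≠ j) (hik : i ≠ k)
    (hjk : j ≠ k) : ⁅B i j, B i k⁆ = -⁅B i j, B j k⁆ :=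
  eq_neg_of_add_eq_zero_left (by rw [← lie_add, hB.lie_add_eq_zero hij hik hjk])

theorem lie_right_eq_neg (hB : IsInfinitesimalPureBraid B) (hij : i ≠ j) (hik : i ≠ k)
    (hjk : j ≠ k) : ⁅B i k, B j k⁆ = -⁅B i j, B j k⁆ :=
  eq_neg_of_add_eq_zero_right (by rw [← add_lie, hB.add_lie_eq_zero hij hik hjk])

theorem smul {R : Type*} [CommRing R] [LieAlgebra R L] (hB : IsInfinitesimalPureBraid B) (c : R) :
    IsInfinitesimalPureBraid (c • B) where
  symm i j hij := by simp only [Pi.smul_apply, hB.symm hij]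
  lie_add_eq_zero i j k hij hik hjk := by
    simp only [Pi.smul_apply, ← smul_add, smul_lie, lie_smul, hB.lie_add_eq_zero hij hik hjk,
      smul_zero]
  lie_eq_zero_of_disjoint i j k l hij hik hil hjk hjl hkl := by
    simp only [Pi.smul_apply, smul_lie, lie_smul,
      hB.lie_eq_zero_of_disjoint hij hik hil hjk hjl hkl, smul_zero]

theorem isClassicalRMatrix {K : Type*} [Field K] [LieAlgebra K L]
    (hB : IsInfinitesimalPureBraid B) {w : ι → K} (hw : Function.Injective w) :
    IsClassicalRMatrix fun i j => (w i - w j)⁻¹ • B i j where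
  skew i j hij := by rw [hB.symm hij, ← neg_smul, ← inv_neg, neg_sub]
  lie_eq_zero_of_disjoint i j k l hij hik hil hjk hjl hkl := by
    simp only [smul_lie, lie_smul, hB.lie_eq_zero_of_disjoint hij hik hil hjk hjl hkl, smul_zero]
  yangBaxter i j k hij hik hjk := by
    have hwij : w i - w j ≠ 0 := sub_ne_zero.2 (hw.ne hij)
    have hwik : w i - w k ≠ 0 := sub_ne_zero.2 (hw.ne hik)
    have hwjk : w j - w k ≠ 0 := sub_ne_zero.2 (hw.ne hjk)
    have partial_fractions : (w i - w j)⁻¹ * (w j - w k)⁻¹ =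
        (w i - w j)⁻¹ * (w i - w k)⁻¹ + (w i - w k)⁻¹ * (w j - w k)⁻¹ := by
      field_simp
      ring
    simp only [smul_lie, lie_smul, hB.lie_left_eq_neg hij hik hjk, hB.lie_right_eq_neg hij hik hjk,
      smul_smul]
    linear_combination (norm := module) partial_fractions • ⁅B i j, B j k⁆

end IsInfinitesimalPureBraid

theorem IsClassicalRMatrix.lie_gaudinHamiltonian_eq_zero [Fintype ι] [DecidableEq ι]
    {r : ι → ι → L} (hr : IsClassicalRMatrix r) (i j : ι) :
    ⁅gaudinHamiltonian r i, gaudinHamiltonian r j⁆ = 0 := by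
  obtain rfl | hij := eq_or_ne i j
  · exact lie_self _
  have ne_of_mem {k : ι} (hk : k ∈ ({i, j}ᶜ : Finset ι)) : i ≠ k ∧ j ≠ k := by
    simpa [eq_comm] using hk
  have lie_sum_sum : ⁅∑ k ∈ {i, j}ᶜ, r i k, ∑ l ∈ {i, j}ᶜ, r j l⁆ =
      ∑ k ∈ {i, j}ᶜ, ⁅r i k, r j k⁆ :=
    sum_lie_sum_eq_sum_lie_of_pairwise _ _ _ fun k hk l hl hkl =>
      hr.lie_eq_zero_of_disjoint (ne_of_mem hk).1 hij (ne_of_mem hl).1 (ne_of_mem hk).2.symm hkl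
        (ne_of_mem hl).2
  calc ⁅gaudinHamiltonian r i, gaudinHamiltonian r j⁆
      = ⁅r i j + ∑ k ∈ {i, j}ᶜ, r i k, -r i j + ∑ k ∈ {i, j}ᶜ, r j k⁆ := by
        rw [gaudinHamiltonian_eq_add_sum r hij, gaudinHamiltonian_eq_add_sum r hij.symm,
          Finset.pair_comm j i, hr.skew hij]
    _ = ⁅r i j, ∑ k ∈ {i, j}ᶜ, r i k⁆ + ⁅r i j, ∑ k ∈ {i, j}ᶜ, r j k⁆ +
          ⁅∑ k ∈ {i, j}ᶜ, r i k, ∑ k ∈ {i, j}ᶜ, r j k⁆ := by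
        rw [← lie_skew (r i j) (∑ k ∈ {i, j}ᶜ, r i k)]
        simp only [add_lie, lie_add, lie_neg, lie_self]
        abel
    _ = ∑ k ∈ {i, j}ᶜ, (⁅r i j, r i k⁆ + ⁅r i j, r j k⁆ + ⁅r i k, r j k⁆) := by
        rw [lie_sum_sum, lie_sum, lie_sum, Finset.sum_add_distrib, Finset.sum_add_distrib]
    _ = 0 := Finset.sum_eq_zero fun k hk => hr.yangBaxter hij (ne_of_mem hk).1 (ne_of_mem hk).2

theorem IsInfinitesimalPureBraid.lie_connection_eq_zero [Fintype ι] [LinearOrder ι]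
    [LocallyFiniteOrderTop ι] [LocallyFiniteOrderBot ι] {K : Type*} [Field K] [LieAlgebra K L]
    {B : ι → ι → L} (hB : IsInfinitesimalPureBraid B) {w : ι → K} (hw : Function.Injective w)
    (u v : ι → K) :
    ⁅∑ p : ι × ι with p.1 < p.2, ((u p.1 - u p.2) / (w p.1 - w p.2)) • B p.1 p.2,
      ∑ p : ι × ι with p.1 < p.2, ((v p.1 - v p.2) / (w p.1 - w p.2)) • B p.1 p.2⁆ = 0 := by
  have hr := hB.isClassicalRMatrix hw
  simp only [div_eq_mul_inv, mul_smul, sum_sub_smul_eq_sum_smul_gaudinHamiltonian hr.skew,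
    sum_lie_sum, smul_lie, lie_smul, hr.lie_gaudinHamiltonian_eq_zero, smul_zero,
    Finset.sum_const_zero]

end LieRing

attribute [local instance 100] LieRing.ofAssociativeRing

section SplitCasimir

variable {R A ι κ : Type*} [CommRing R] [Ring A] [Algebra R A] [Fintype κ]

-- With `c` the structure constants of a Lie algebra, `hc` expresses invariance of the bilinear form
-- for which the chosen basis is orthonormal.
theorem commute_sum_mul_add_of_structureConstants {a b : κ → A} {c : κ → κ → κ → R}
    (hc : ∀ ℓ m n, c n m ℓ = -c ℓ m n) (hab : ∀ ℓ m, Commute (a ℓ) (b m))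
    (ha : ∀ ℓ m, ⁅a ℓ, a m⁆ = ∑ n, c ℓ m n • a n) (hb : ∀ ℓ m, ⁅b ℓ, b m⁆ = ∑ n, c ℓ m n • b n)
    (m : κ) : Commute (∑ ℓ, a ℓ * b ℓ) (a m + b m) := by
  have leibniz (ℓ : κ) : ⁅a ℓ * b ℓ, a m + b m⁆ = ⁅a ℓ, a m⁆ * b ℓ + a ℓ * ⁅b ℓ, b m⁆ := by
    have lie_left : ⁅a ℓ * b ℓ, a m⁆ = ⁅a ℓ, a m⁆ * b ℓ := by
      rw [Ring.lie_def, Ring.lie_def, sub_mul, mul_assoc, ← (hab m ℓ).eq, ← mul_assoc,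
        mul_assoc (a m)]
    have lie_right : ⁅a ℓ * b ℓ, b m⁆ = a ℓ * ⁅b ℓ, b m⁆ := by
      rw [Ring.lie_def, Ring.lie_def, mul_sub, mul_assoc, ← mul_assoc (b m), ← (hab ℓ m).eq,
        mul_assoc]
    rw [lie_add, lie_left, lie_right]
  rw [commute_iff_lie_eq]
  calc ⁅∑ ℓ, a ℓ * b ℓ, a m + b m⁆
      = ∑ ℓ, (⁅a ℓ, a m⁆ * b ℓ + a ℓ * ⁅b ℓ, b m⁆) := by rw [sum_lie]; simp only [leibniz]
    _ = ∑ ℓ, ∑ n, c ℓ m n • (a n * b ℓ) + ∑ ℓ, ∑ n, c ℓ m n • (a ℓ * b n) := by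
        simp only [ha, hb, Finset.sum_mul, Finset.mul_sum, smul_mul_assoc, mul_smul_comm,
          Finset.sum_add_distrib]
    _ = ∑ ℓ, ∑ n, (c n m ℓ + c ℓ m n) • (a ℓ * b n) := by
        rw [Finset.sum_comm]
        simp only [add_smul, Finset.sum_add_distrib]
    _ = 0 := Finset.sum_eq_zero fun ℓ _ => Finset.sum_eq_zero fun n _ => by
        rw [hc ℓ m n, neg_add_cancel, zero_smul]

theorem isInfinitesimalPureBraid_sum_mul {s : κ → ι → A} {c : κ → κ → κ → R}
    (hc : ∀ ℓ m n, c n m ℓ = -c ℓ m n)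
    (hcomm : ∀ ℓ m ⦃i j⦄, i ≠ j → Commute (s ℓ i) (s m j))
    (hlie : ∀ i ℓ m, ⁅s ℓ i, s m i⁆ = ∑ n, c ℓ m n • s n i) :
    IsInfinitesimalPureBraid fun i j => ∑ ℓ, s ℓ i * s ℓ j := by
  have commute_site (m : κ) {i j k : ι} (hik : i ≠ k) (hjk : j ≠ k) :
      Commute (∑ ℓ, s ℓ i * s ℓ j) (s m k) :=
    Commute.sum_left _ _ _ fun ℓ _ => (hcomm ℓ m hik).mul_left (hcomm ℓ m hjk)
  refine ⟨fun i j hij => ?_, fun i j k hij hik hjk => ?_, fun i j k l _ hik hil hjk hjl _ => ?_⟩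
  · exact Finset.sum_congr rfl fun ℓ _ => hcomm ℓ ℓ hij
  · simp only [← commute_iff_lie_eq, ← Finset.sum_add_distrib, ← add_mul]
    exact Commute.sum_right _ _ _ fun m _ =>
      (commute_sum_mul_add_of_structureConstants hc (fun ℓ n => hcomm ℓ n hij) (hlie i) (hlie j)
        m).mul_right (commute_site m hik hjk)
  · exact commute_iff_lie_eq.1 <| Commute.sum_right _ _ _ fun m _ =>
      (commute_site m hik hjk).mul_right (commute_site m hil hjl)

end SplitCasimir

section TensorPower

variable {R ι n : Type*} [CommSemiring R] [Fintype ι] [DecidableEq ι] [Fintype n] [DecidableEq n]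

/-- The Kronecker product `⨂ a, M a` of a family of square matrices, with rows and columns indexed
by functions `ι → n`. -/
def piKronecker : (ι → Matrix n n R) →* Matrix (ι → n) (ι → n) R where
  toFun M := Matrix.of fun x y => ∏ a, M a (x a) (y a)
  map_one' := by
    ext x y
    simp only [Matrix.of_apply, Pi.one_apply, Matrix.one_apply, Fintype.prod_boole, funext_iff]
  map_mul' M N := by
    ext x y
    simp only [Matrix.of_apply, Pi.mul_apply, Matrix.mul_apply, ← Finset.prod_mul_distrib,
      Finset.prod_univ_sum, Fintype.piFinset_univ]

theorem piKronecker_mulSingle_apply (a : ι) (M : Matrix n n R) (x y : ι → n) :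
    piKronecker (Pi.mulSingle a M) x y =
      M (x a) (y a) * ∏ b ∈ Finset.univ.erase a, if x b = y b then 1 else 0 := by
  calc ∏ b, Pi.mulSingle (M := fun _ => Matrix n n R) a M b (x b) (y b)
      = M (x a) (y a) * ∏ b ∈ Finset.univ.erase a,
          Pi.mulSingle (M := fun _ => Matrix n n R) a M b (x b) (y b) := by
        rw [← Finset.mul_prod_erase _ _ (Finset.mem_univ a), Pi.mulSingle_eq_same]
    _ = M (x a) (y a) * ∏ b ∈ Finset.univ.erase a, if x b = y b then 1 else 0 :=
        congrArg _ <| Finset.prod_congr rfl fun b hb => by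
          rw [Pi.mulSingle_eq_of_ne (Finset.ne_of_mem_erase hb), Matrix.one_apply]

/-- The embedding of a matrix algebra into its tensor power as operators on the tensor factor `a`,
acting as the identity on all other factors. -/
def siteHom (a : ι) : Matrix n n R →ₐ[R] Matrix (ι → n) (ι → n) R :=
  AlgHom.ofLinearMap
    { toFun M := piKronecker (Pi.mulSingle a M)
      map_add' M N := by
        ext x y
        simp only [piKronecker_mulSingle_apply, Matrix.add_apply, add_mul]
      map_smul' c M := by
        ext x y
        simp only [piKronecker_mulSingle_apply, Matrix.smul_apply, smul_mul_assoc,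
          RingHom.id_apply] }
    (by simp)
    (fun M N => by simp [Pi.mulSingle_mul])

theorem siteHom_eq_piKronecker (a : ι) (M : Matrix n n R) :
    siteHom a M = piKronecker (Pi.mulSingle a M) :=
  rfl

theorem commute_siteHom {a b : ι} (hab : a ≠ b) (M N : Matrix n n R) :
    Commute (siteHom a M) (siteHom b N) :=
  (Pi.mulSingle_commute (f := fun _ => Matrix n n R) hab M N).map piKronecker

end TensorPower

section Spin

/-- The Levi-Civita symbol `ε ℓ m n`, which gives the structure constants of `sl₂`. On distinct
indices the product of differences of `0, 1, 2` is `±2`, with the sign of the permutation. -/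
noncomputable def leviCivita (ℓ m n : Fin 3) : ℂ :=
  ((m : ℂ) - ℓ) * (n - ℓ) * (n - m) / 2

theorem leviCivita_swap (ℓ m n : Fin 3) : leviCivita n m ℓ = -leviCivita ℓ m n := by
  simp only [leviCivita]
  ring

theorem lie_pauli (ℓ m : Fin 3) :
    ⁅pauli ℓ, pauli m⁆ = ∑ n, (2 * Complex.I * leviCivita ℓ m n) • pauli n := by
  ext x y
  fin_cases ℓ <;> fin_cases m <;> fin_cases x <;> fin_cases y <;>
    norm_num [Ring.lie_def, Fin.sum_univ_three, pauli, leviCivita, Complex.ext_iff]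

variable (d : ℕ)

theorem spinOp_eq_siteHom (ℓ : Fin 3) (a : Fin d) :
    spinOp d ℓ a = siteHom a ((1 / 2 : ℂ) • pauli ℓ) := by
  ext x y
  rw [siteHom_eq_piKronecker, piKronecker_mulSingle_apply]
  rfl

theorem commute_spinOp (ℓ m : Fin 3) {a b : Fin d} (hab : a ≠ b) :
    Commute (spinOp d ℓ a) (spinOp d m b) := by
  simpa only [spinOp_eq_siteHom] using commute_siteHom hab _ _

theorem lie_spinOp (a : Fin d) (ℓ m : Fin 3) :
    ⁅spinOp d ℓ a, spinOp d m a⁆ = ∑ n, (Complex.I * leviCivita ℓ m n) • spinOp d n a := by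
  simp only [spinOp_eq_siteHom]
  calc ⁅siteHom a ((1 / 2 : ℂ) • pauli ℓ), siteHom a ((1 / 2 : ℂ) • pauli m)⁆
      = siteHom a ((1 / 4 : ℂ) • ⁅pauli ℓ, pauli m⁆) := by
        rw [← AlgHom.coe_toLieHom, ← LieHom.map_lie, smul_lie, lie_smul, smul_smul]
        norm_num
    _ = ∑ n, (Complex.I * leviCivita ℓ m n) • siteHom a ((1 / 2 : ℂ) • pauli n) := by
        simp only [lie_pauli, Finset.smul_sum, map_sum, map_smul, smul_smul]
        exact Finset.sum_congr rfl fun n _ => by ring_nf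

theorem isInfinitesimalPureBraid_omegaOp : IsInfinitesimalPureBraid (omegaOp d) :=
  isInfinitesimalPureBraid_sum_mul (c := fun ℓ m n => Complex.I * leviCivita ℓ m n)
    (fun ℓ m n => by rw [leviCivita_swap, mul_neg]) (fun ℓ m _ _ => commute_spinOp d ℓ m)
    (lie_spinOp d)

end Spin

/-- **KZ coefficient matrices satisfy the infinitesimal pure braid relations.**
With `Ω_{ij} = ∑_ℓ s_ℓ^{(i)} ∘ s_ℓ^{(j)}` on `(ℂ²)^{⊗d}`, the family `B_{ij} = Ω_{ij}`
satisfies `[Ω_{ij}, Ω_{ik} + Ω_{jk}] = 0` and `[Ω_{ij} + Ω_{ik}, Ω_{jk}] = 0` for `i < j < k`,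
and `[Ω_{ij}, Ω_{kl}] = 0` for pairwise distinct indices.  Consequently the
Knizhnik–Zamolodchikov connection `d − λ ∑_{i<j} Ω_{ij} d(w_i − w_j)/(w_i − w_j)` is flat
for every `λ ∈ ℂ` (pointwise commutation of its contracted coefficient matrices). -/
theorem kz_infinitesimal_pure_braid (d : ℕ) (hd : 1 ≤ d) :
    ((∀ i j k : Fin d, i < j → j < k →
        Commute (omegaOp d i j) (omegaOp d i k + omegaOp d j k) ∧
        Commute (omegaOp d i j + omegaOp d i k) (omegaOp d j k)) ∧
      (∀ i j k l : Fin d, i ≠ j → i ≠ k → i ≠ l → j ≠ k → j ≠ l → k ≠ l →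
        Commute (omegaOp d i j) (omegaOp d k l))) ∧
    (∀ (lam : ℂ) (w : Fin d → ℂ), (∀ i j : Fin d, i ≠ j → w i ≠ w j) →
      ∀ u v : Fin d → ℂ,
        Commute
          (∑ p ∈ Finset.univ.filter (fun p : Fin d × Fin d => p.1 < p.2),
            (((u p.1 - u p.2) / (w p.1 - w p.2)) • ((-lam) • omegaOp d p.1 p.2)))
          (∑ p ∈ Finset.univ.filter (fun p : Fin d × Fin d => p.1 < p.2),
            (((v p.1 - v p.2) / (w p.1 - w p.2)) • ((-lam) • omegaOp d p.1 p.2)))) := by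
  have hΩ := isInfinitesimalPureBraid_omegaOp d
  refine ⟨⟨fun i j k hij hjk => ?_, fun i j k l hij hik hil hjk hjl hkl => ?_⟩,
    fun lam w hw u v => ?_⟩
  · have hik := hij.trans hjk
    exact ⟨commute_iff_lie_eq.2 (hΩ.lie_add_eq_zero hij.ne hik.ne hjk.ne),
      commute_iff_lie_eq.2 (hΩ.add_lie_eq_zero hij.ne hik.ne hjk.ne)⟩
  · exact commute_iff_lie_eq.2 (hΩ.lie_eq_zero_of_disjoint hij hik hil hjk hjl hkl)
  · have hw_inj : Function.Injective w := fun i j => not_imp_not.1 (hw i j)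
    exact commute_iff_lie_eq.2 ((hΩ.smul (-lam)).lie_connection_eq_zero hw_inj u v)
end

section
/- Catalan-triangle dimension formula for the joint spin eigenspaces: let d ≥ 1, let k, r be integers with 0 ≤ 2k ≤ d and 0 ≤ r ≤ d − 2k, and set l = (d − 2k)/2 and m = l − r. Then the joint eigenspace V_{l,m} = { v ∈ (ℂ²)^{⊗d} : L² v = l(l+1) v and L₃ v = m v } has complex dimension C(d, k) − C(d, k−1), where C(d, −1) is interpreted as 0. In particular for k = 0 (i.e. l = d/2) each such eigenspace is one-dimensional. -/
/-- The joint eigenspace `V_{c₁,c₂} = { v : L² v = c₁ v ∧ L₃ v = c₂ v }` of the total-spin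
Casimir `L²` and of `L₃` on `(ℂ²)^{⊗d}`. -/
noncomputable def spinEigenspace (d : ℕ) (c₁ c₂ : ℂ) :
    Submodule ℂ ((Fin d → Fin 2) → ℂ) :=
  LinearMap.ker (Matrix.toLin' (totalSpinSq d) - c₁ • LinearMap.id) ⊓
  LinearMap.ker (Matrix.toLin' (totalSpin d 2) - c₂ • LinearMap.id)

/-!
The operators `h = 2 L₃`, `e = L₁ + i L₂`, `f = L₁ - i L₂` form an `sl₂` triple, and `4 L²` is its
Casimir element `h² + 2h + 4fe`.  With `n = 2l`, the space `V_{l,m}` consists of the vectors of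
weight `2m` on which the Casimir element acts as `n(n+2)`.

On the weight `μ` part of the Casimir eigenvalue `c`, `4fe` is the scalar `c - μ(μ+2)`, and this is
also `4ef` on the part of weight `μ + 2`; when it is nonzero these two parts have the same
dimension.  For `c = n(n+2)` this reduces any weight `n - 2r` with `0 ≤ r ≤ n` to the weight `n`,
and shows that the weight `n + 2` does not occur.  Hence `V_{l,l}` is the kernel of `e` on the
weight space of weight `n`, and `e` maps that weight space onto the one of weight `n + 2`, so that
`dim V_{l,m}` is the difference of the dimensions of two consecutive weight spaces of `(ℂ²)^{⊗d}`.
Counting basis vectors, weight `d - 2j` has multiplicity `C(d, j)`.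
-/

open Module

attribute [local instance] LieRing.ofAssociativeRing

theorem finrank_map_add_finrank_inf_ker {K V W : Type*} [DivisionRing K] [AddCommGroup V]
    [Module K V] [AddCommGroup W] [Module K W] (g : V →ₗ[K] W) (p : Submodule K V)
    [FiniteDimensional K p] :
    finrank K (p.map g) + finrank K ↥(p ⊓ LinearMap.ker g) = finrank K p := by
  rw [← LinearMap.finrank_range_add_finrank_ker (g.domRestrict p), LinearMap.range_domRestrict,
    LinearMap.ker_domRestrict, ← Submodule.map_comap_subtype, Submodule.finrank_map_subtype_eq]

section Casimir

variable {A : Type*} [Ring A] {h e f : A}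

/-- The Casimir element of an `sl₂` triple in an associative ring, normalised so that it acts as
`n * (n + 2)` on a vector of weight `n` killed by `e`. -/
def sl2Casimir (h e f : A) : A := h * h + 2 • h + 4 • (f * e)

theorem commute_sl2Casimir_e (t : IsSl2Triple h e f) : Commute (sl2Casimir h e f) e := by
  have lie_e_f : e * f - f * e - h = 0 := sub_eq_zero.2 t.lie_e_f
  have lie_h_e : h * e - e * h - 2 • e = 0 := sub_eq_zero.2 t.lie_h_e_nsmul
  refine sub_eq_zero.1 ?_
  calc sl2Casimir h e f * e - e * sl2Casimir h e f
    _ = h * (h * e - e * h - 2 • e) + (h * e - e * h - 2 • e) * h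
          - 4 • ((e * f - f * e - h) * e) := by
      unfold sl2Casimir
      noncomm_ring
    _ = 0 := by rw [lie_e_f, lie_h_e, mul_zero, zero_mul, zero_mul, smul_zero, add_zero, sub_zero]

theorem sl2Casimir_neg_swap (t : IsSl2Triple h e f) :
    sl2Casimir (-h) f e = sl2Casimir h e f := by
  have lie_e_f : e * f = h + f * e := sub_eq_iff_eq_add.1 t.lie_e_f
  rw [sl2Casimir, sl2Casimir, lie_e_f]
  noncomm_ring

theorem commute_sl2Casimir_f (t : IsSl2Triple h e f) : Commute (sl2Casimir h e f) f :=
  sl2Casimir_neg_swap t ▸ commute_sl2Casimir_e t.symm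

end Casimir

section WeightSpaces

variable {K V : Type*} [CommRing K] [AddCommGroup V] [Module K V]
variable {h e f : End K V} {c μ : K} {v : V}

theorem apply_e_mem_eigenspace (t : IsSl2Triple h e f) (hv : v ∈ h.eigenspace μ) :
    e v ∈ h.eigenspace (μ + 2) := by
  rw [End.mem_eigenspace_iff] at hv ⊢
  have lie_h_e : h (e v) - e (h v) = 2 • e v := LinearMap.congr_fun t.lie_h_e_nsmul v
  rw [sub_eq_iff_eq_add.1 lie_h_e, hv, map_smul]
  module

theorem apply_f_mem_eigenspace (t : IsSl2Triple h e f) (hv : v ∈ h.eigenspace (μ + 2)) :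
    f v ∈ h.eigenspace μ := by
  rw [End.mem_eigenspace_iff] at hv ⊢
  have lie_h_f : h (f v) - f (h v) = -(2 • f v) := LinearMap.congr_fun t.lie_h_f_nsmul v
  rw [sub_eq_iff_eq_add.1 lie_h_f, hv, map_smul]
  module

theorem sl2Casimir_apply_of_mem_eigenspace (hv : v ∈ h.eigenspace μ) :
    sl2Casimir h e f v = (μ * (μ + 2)) • v + 4 • f (e v) := by
  rw [End.mem_eigenspace_iff] at hv
  simp only [sl2Casimir, LinearMap.add_apply, LinearMap.smul_apply, End.mul_apply, hv, map_smul]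
  module

theorem sl2Casimir_apply_of_mem_eigenspace_add_two (t : IsSl2Triple h e f)
    (hv : v ∈ h.eigenspace (μ + 2)) :
    sl2Casimir h e f v = (μ * (μ + 2)) • v + 4 • e (f v) := by
  have neg_hv : v ∈ End.eigenspace (-h) (-(μ + 2)) := by
    rw [End.mem_eigenspace_iff] at hv ⊢
    rw [LinearMap.neg_apply, hv, neg_smul]
  rw [← sl2Casimir_neg_swap t, sl2Casimir_apply_of_mem_eigenspace neg_hv]
  module

/-- The vectors of weight `μ` on which the Casimir element of the triple `h, e, f` acts as `c`. -/
def casimirWeightSpace (h e f : End K V) (c μ : K) : Submodule K V :=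
  End.eigenspace (sl2Casimir h e f) c ⊓ h.eigenspace μ

theorem apply_e_mem_casimirWeightSpace (t : IsSl2Triple h e f)
    (hv : v ∈ casimirWeightSpace h e f c μ) : e v ∈ casimirWeightSpace h e f c (μ + 2) :=
  ⟨End.mapsTo_genEigenspace_of_comm (commute_sl2Casimir_e t) c 1 hv.1,
    apply_e_mem_eigenspace t hv.2⟩

theorem apply_f_mem_casimirWeightSpace (t : IsSl2Triple h e f)
    (hv : v ∈ casimirWeightSpace h e f c (μ + 2)) : f v ∈ casimirWeightSpace h e f c μ :=
  ⟨End.mapsTo_genEigenspace_of_comm (commute_sl2Casimir_f t) c 1 hv.1,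
    apply_f_mem_eigenspace t hv.2⟩

theorem four_smul_f_e_of_mem_casimirWeightSpace (hv : v ∈ casimirWeightSpace h e f c μ) :
    4 • f (e v) = (c - μ * (μ + 2)) • v := by
  rw [sub_smul, eq_sub_iff_add_eq', ← sl2Casimir_apply_of_mem_eigenspace hv.2,
    End.mem_eigenspace_iff.1 hv.1]

theorem four_smul_e_f_of_mem_casimirWeightSpace_add_two (t : IsSl2Triple h e f)
    (hv : v ∈ casimirWeightSpace h e f c (μ + 2)) : 4 • e (f v) = (c - μ * (μ + 2)) • v := by
  rw [sub_smul, eq_sub_iff_add_eq', ← sl2Casimir_apply_of_mem_eigenspace_add_two t hv.2,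
    End.mem_eigenspace_iff.1 hv.1]

end WeightSpaces

section FiniteDimensional

variable {K V : Type*} [Field K] [AddCommGroup V] [Module K V] [FiniteDimensional K V]
variable {h e f : End K V} {c μ : K}

theorem finrank_casimirWeightSpace_add_two (t : IsSl2Triple h e f) (hc : c ≠ μ * (μ + 2)) :
    finrank K (casimirWeightSpace h e f c (μ + 2)) = finrank K (casimirWeightSpace h e f c μ) := by
  let lower := f.restrict fun _ hv ↦ apply_f_mem_casimirWeightSpace (c := c) (μ := μ) t hv
  let raise := e.restrict fun _ hv ↦ apply_e_mem_casimirWeightSpace (c := c) (μ := μ) t hv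
  have lower_injective : Function.Injective lower := by
    refine (injective_iff_map_eq_zero lower).2 fun v hv ↦ Subtype.ext ?_
    have f_v : f v = 0 := congrArg Subtype.val hv
    have smul_v := four_smul_e_f_of_mem_casimirWeightSpace_add_two t v.2
    rw [f_v, map_zero, smul_zero] at smul_v
    exact (smul_eq_zero.1 smul_v.symm).resolve_left (sub_ne_zero.2 hc)
  have raise_injective : Function.Injective raise := by
    refine (injective_iff_map_eq_zero raise).2 fun v hv ↦ Subtype.ext ?_
    have e_v : e v = 0 := congrArg Subtype.val hv
    have smul_v := four_smul_f_e_of_mem_casimirWeightSpace v.2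
    rw [e_v, map_zero, smul_zero] at smul_v
    exact (smul_eq_zero.1 smul_v.symm).resolve_left (sub_ne_zero.2 hc)
  exact le_antisymm (LinearMap.finrank_le_finrank_of_injective lower_injective)
    (LinearMap.finrank_le_finrank_of_injective raise_injective)

theorem finrank_casimirWeightSpace_add_two_mul (t : IsSl2Triple h e f) (r : ℕ)
    (hc : ∀ j < r, c ≠ (μ + 2 * j) * (μ + 2 * j + 2)) :
    finrank K (casimirWeightSpace h e f c (μ + 2 * r)) =
      finrank K (casimirWeightSpace h e f c μ) := by
  induction r with
  | zero => rw [Nat.cast_zero, mul_zero, add_zero]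
  | succ r ih =>
    have add_two_mul_succ : μ + 2 * (r + 1 : ℕ) = μ + 2 * r + 2 := by push_cast; ring
    rw [add_two_mul_succ, finrank_casimirWeightSpace_add_two t (hc r r.lt_succ_self),
      ih fun j hj ↦ hc j (Nat.lt_succ_of_lt hj)]

variable [CharZero K]

theorem exists_nat_eigenspace_add_two_mul_eq_bot (h : End K V) (μ : K) :
    ∃ r : ℕ, h.eigenspace (μ + 2 * r) = ⊥ := by
  have weight_injective : Function.Injective fun r : ℕ ↦ μ + 2 * r := fun r s hrs ↦ by
    simpa using hrs
  obtain ⟨_, ⟨r, rfl⟩, hr⟩ :=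
    (Set.infinite_range_of_injective weight_injective).exists_notMem_finite h.finite_hasEigenvalue
  exact ⟨r, by simpa [End.hasEigenvalue_iff] using hr⟩

-- The ladder of isomorphisms `e` starting at weight `μ` never breaks, yet it must leave the finite
-- set of eigenvalues of `h`.
theorem casimirWeightSpace_eq_bot (t : IsSl2Triple h e f)
    (hc : ∀ j : ℕ, c ≠ (μ + 2 * j) * (μ + 2 * j + 2)) : casimirWeightSpace h e f c μ = ⊥ := by
  obtain ⟨r, hr⟩ := exists_nat_eigenspace_add_two_mul_eq_bot h μ
  rw [← Submodule.finrank_eq_zero, ← finrank_casimirWeightSpace_add_two_mul t r fun j _ ↦ hc j,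
    casimirWeightSpace, hr, inf_bot_eq, finrank_bot]

theorem casimirWeightSpace_add_two_eq_bot (t : IsSl2Triple h e f) (n : ℕ) :
    casimirWeightSpace h e f (n * (n + 2) : K) (n + 2) = ⊥ := by
  refine casimirWeightSpace_eq_bot t fun j ↦ ?_
  norm_cast
  nlinarith

theorem casimirWeightSpace_eq_ker_e (t : IsSl2Triple h e f) (n : ℕ) :
    casimirWeightSpace h e f (n * (n + 2) : K) n = h.eigenspace (n : K) ⊓ LinearMap.ker e := by
  ext v
  refine ⟨fun hv ↦ ⟨hv.2, ?_⟩, fun ⟨hv, e_v⟩ ↦ ⟨?_, hv⟩⟩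
  · have e_v := apply_e_mem_casimirWeightSpace t hv
    rwa [casimirWeightSpace_add_two_eq_bot t n] at e_v
  · have e_v : e v = 0 := e_v
    simp [sl2Casimir_apply_of_mem_eigenspace hv, e_v]

-- A vector of weight `n + 2` killed by `e * f` has Casimir eigenvalue `n * (n + 2)`, which does not
-- occur in that weight; so `e * f` is invertible there.
theorem map_e_eigenspace (t : IsSl2Triple h e f) (n : ℕ) :
    (h.eigenspace (n : K)).map e = h.eigenspace (n + 2 : K) := by
  refine le_antisymm (Submodule.map_le_iff_le_comap.2 fun _ ↦ apply_e_mem_eigenspace t)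
    fun w hw ↦ ?_
  let raise := e.restrict fun _ hv ↦ apply_e_mem_eigenspace (μ := (n : K)) t hv
  let lower := f.restrict fun _ hv ↦ apply_f_mem_eigenspace (μ := (n : K)) t hv
  have raise_lower_injective : Function.Injective (raise ∘ₗ lower) := by
    refine (injective_iff_map_eq_zero _).2 fun v hv ↦ Subtype.ext ?_
    have e_f_v : e (f v) = 0 := congrArg Subtype.val hv
    have v_mem : (v : V) ∈ casimirWeightSpace h e f (n * (n + 2) : K) (n + 2) := by
      refine ⟨?_, v.2⟩
      simp [sl2Casimir_apply_of_mem_eigenspace_add_two t v.2, e_f_v]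
    rwa [casimirWeightSpace_add_two_eq_bot t n] at v_mem
  obtain ⟨v, hv⟩ := LinearMap.injective_iff_surjective.1 raise_lower_injective ⟨w, hw⟩
  exact ⟨lower v, (lower v).2, congrArg Subtype.val hv⟩

theorem finrank_casimirWeightSpace_add_finrank_eigenspace (t : IsSl2Triple h e f) {n r : ℕ}
    (hr : r ≤ n) :
    finrank K (casimirWeightSpace h e f (n * (n + 2) : K) (n - 2 * r)) +
      finrank K (h.eigenspace (n + 2 : K)) = finrank K (h.eigenspace (n : K)) := by
  have ladder : ∀ j < r, (n * (n + 2) : K) ≠ (n - 2 * r + 2 * j) * (n - 2 * r + 2 * j + 2) := by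
    intro j hj
    have hr_le : (r : ℤ) ≤ n := mod_cast hr
    have hj_lt : (j : ℤ) < r := mod_cast hj
    have ne_int : (n * (n + 2) : ℤ) ≠ (n - 2 * r + 2 * j) * (n - 2 * r + 2 * j + 2) := by
      nlinarith [hr_le, hj_lt]
    exact mod_cast ne_int
  rw [← finrank_casimirWeightSpace_add_two_mul t r ladder, sub_add_cancel,
    casimirWeightSpace_eq_ker_e t, add_comm, ← map_e_eigenspace t,
    finrank_map_add_finrank_inf_ker]

end FiniteDimensional

section TensorPower

variable {ι n R : Type*} [DecidableEq ι] [Fintype n] [DecidableEq n] [CommRing R]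

/-- The action of `n × n` matrices on the `a`-th factor of `(Rⁿ)^{⊗ι}`, the tensor power being
realised as the space of functions `(ι → n) → R`. -/
def siteAction (a : ι) : Matrix n n R →ₐ[R] End R ((ι → n) → R) :=
  AlgHom.ofLinearMap
    { toFun A :=
        { toFun v x := ∑ i, A (x a) i * v (Function.update x a i)
          map_add' v w := by ext x; simp [mul_add, Finset.sum_add_distrib]
          map_smul' c v := by ext x; simp [Finset.mul_sum, mul_left_comm] }
      map_add' A B := by
        refine LinearMap.ext fun v ↦ funext fun x ↦ ?_
        simp [add_mul, Finset.sum_add_distrib]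
      map_smul' c A := by
        refine LinearMap.ext fun v ↦ funext fun x ↦ ?_
        simp [Finset.mul_sum, mul_assoc] }
    (by
      refine LinearMap.ext fun v ↦ funext fun x ↦ ?_
      simp [Matrix.one_apply])
    fun A B ↦ by
      refine LinearMap.ext fun v ↦ funext fun x ↦ ?_
      simp only [LinearMap.coe_mk, AddHom.coe_mk, End.mul_apply, Matrix.mul_apply,
        Function.update_self, Function.update_idem, Finset.sum_mul, Finset.mul_sum, mul_assoc]
      exact Finset.sum_comm

theorem siteAction_apply (a : ι) (A : Matrix n n R) (v : (ι → n) → R) (x : ι → n) :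
    siteAction a A v x = ∑ i, A (x a) i * v (Function.update x a i) := rfl

theorem commute_siteAction {a b : ι} (hab : a ≠ b) (A B : Matrix n n R) :
    Commute (siteAction a A) (siteAction b B) := by
  refine LinearMap.ext fun v ↦ funext fun x ↦ ?_
  simp only [End.mul_apply, siteAction_apply, Function.update_of_ne hab,
    Function.update_of_ne hab.symm, Function.update_comm hab, Finset.mul_sum]
  rw [Finset.sum_comm]
  simp only [mul_left_comm]

variable [Fintype ι]

variable (ι n R) in
/-- The representation of `gl n` on `(Rⁿ)^{⊗ι}` in which a matrix acts by the sum over all factors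
of its action on a single factor. -/
def tensorPowerAction : Matrix n n R →ₗ⁅R⁆ End R ((ι → n) → R) where
  toLinearMap := ∑ a : ι, (siteAction a).toLinearMap
  map_lie' {A B} := by
    have lie_siteAction (a b : ι) : ⁅siteAction a A, siteAction b B⁆ =
        if a = b then siteAction a ⁅A, B⁆ else 0 := by
      split_ifs with hab
      · simp only [← hab, Ring.lie_def, map_sub, map_mul]
      · exact (commute_siteAction hab A B).lie_eq
    simp only [AddHom.toFun_eq_coe, LinearMap.coe_toAddHom, LinearMap.sum_apply,
      AlgHom.toLinearMap_apply, sum_lie_sum, lie_siteAction, Finset.sum_ite_eq,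
      Finset.mem_univ, if_true]

theorem tensorPowerAction_apply (A : Matrix n n R) :
    tensorPowerAction ι n R A = ∑ a, siteAction a A :=
  LinearMap.sum_apply _ _ _

theorem tensorPowerAction_diagonal (w : n → R) :
    tensorPowerAction ι n R (Matrix.diagonal w) =
      Matrix.toLin' (Matrix.diagonal fun x : ι → n ↦ ∑ a, w (x a)) := by
  refine LinearMap.ext fun v ↦ funext fun x ↦ ?_
  simp [tensorPowerAction_apply, siteAction_apply, Matrix.diagonal_apply, Matrix.mulVec_diagonal,
    Finset.sum_mul]

end TensorPower

section Counting

theorem finrank_ker_toLin'_diagonal {m K : Type*} [Fintype m] [DecidableEq m] [Field K]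
    [DecidableEq K] (w : m → K) :
    finrank K (LinearMap.ker (Matrix.toLin' (Matrix.diagonal w))) = Finset.card {x | w x = 0} := by
  have rank_eq : finrank K (LinearMap.range (Matrix.toLin' (Matrix.diagonal w))) =
      Finset.card {x | ¬w x = 0} :=
    (Matrix.rank_diagonal w).trans (Fintype.card_subtype _)
  have card_compl : Finset.card {x | w x = 0} + Finset.card {x | ¬w x = 0} = Fintype.card m :=
    Finset.card_filter_add_card_filter_not _
  have rank_nullity := LinearMap.finrank_range_add_finrank_ker (Matrix.toLin' (Matrix.diagonal w))
  rw [rank_eq, finrank_fintype_fun_eq_card] at rank_nullity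
  omega

theorem finrank_eigenspace_toLin'_diagonal {m K : Type*} [Fintype m] [DecidableEq m] [Field K]
    [DecidableEq K] (w : m → K) (μ : K) :
    finrank K (End.eigenspace (Matrix.toLin' (Matrix.diagonal w)) μ) =
      Finset.card {x | w x = μ} := by
  have eigenspace_eq_ker : End.eigenspace (Matrix.toLin' (Matrix.diagonal w)) μ =
      LinearMap.ker (Matrix.toLin' (Matrix.diagonal fun x ↦ w x - μ)) := by
    ext v
    simp only [End.mem_eigenspace_iff, LinearMap.mem_ker, Matrix.toLin'_apply, funext_iff,
      Matrix.mulVec_diagonal, Pi.smul_apply, smul_eq_mul, Pi.zero_apply, sub_mul, sub_eq_zero]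
  rw [eigenspace_eq_ker, finrank_ker_toLin'_diagonal]
  simp only [sub_eq_zero]

theorem card_filter_card_eq_one_eq_choose (ι : Type*) [Fintype ι] [DecidableEq ι] (j : ℕ) :
    Finset.card {x : ι → Fin 2 | Finset.card {a | x a = 1} = j} = (Fintype.card ι).choose j := by
  rw [← Finset.card_univ, ← Finset.card_powersetCard]
  refine Finset.card_nbij' (fun x ↦ ({a | x a = 1} : Finset ι))
    (fun s a ↦ if a ∈ s then 1 else 0) ?_ ?_ ?_ ?_
  · simp [Set.MapsTo]
  · simp [Set.MapsTo]
  · intro x _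
    ext a
    rcases Fin.exists_fin_two.1 ⟨x a, rfl⟩ with h | h <;> simp [h]
  · intro s _
    simp

end Counting

section Spin

theorem pauli_zero_eq : pauli 0 = Matrix.single 0 1 1 + Matrix.single 1 0 1 := by
  ext i j
  fin_cases i <;> fin_cases j <;> simp [pauli]

theorem pauli_one_eq :
    pauli 1 = Complex.I • (Matrix.single 1 0 1 - Matrix.single 0 1 1) := by
  ext i j
  fin_cases i <;> fin_cases j <;> simp [pauli]

theorem pauli_two_eq : pauli 2 = Matrix.diagonal ![1, -1] := by
  ext i j
  fin_cases i <;> fin_cases j <;> simp [pauli]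

theorem isSl2Triple_pauli :
    IsSl2Triple (pauli 2) (Matrix.single 0 1 1) (Matrix.single 1 0 1) where
  h_ne_zero := fun h ↦ by simpa [pauli] using congr_fun₂ h 0 0
  lie_e_f := by
    ext i j
    fin_cases i <;> fin_cases j <;> simp [pauli, Ring.lie_def]
  lie_h_e_nsmul := by
    ext i j
    fin_cases i <;> fin_cases j <;>
      simp [pauli_two_eq, Ring.lie_def, Matrix.mul_diagonal, one_add_one_eq_two]
  lie_h_f_nsmul := by
    ext i j
    fin_cases i <;> fin_cases j <;>
      simp [pauli_two_eq, Ring.lie_def, Matrix.mul_diagonal, one_add_one_eq_two, ← neg_add']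

theorem toLin'_spinOp (d : ℕ) (ℓ : Fin 3) (a : Fin d) :
    Matrix.toLin' (spinOp d ℓ a) = siteAction a ((1 / 2 : ℂ) • pauli ℓ) := by
  refine LinearMap.ext fun v ↦ funext fun x ↦ ?_
  rw [Matrix.toLin'_apply, Matrix.mulVec, dotProduct, siteAction_apply]
  refine (Fintype.sum_of_injective _ (Function.update_injective x a) _ _ ?_ fun i ↦ ?_).symm
  · intro y hy
    obtain ⟨b, hb, hxy⟩ : ∃ b ≠ a, x b ≠ y b := by
      by_contra! eq_off_a
      exact hy ⟨y a, Function.update_eq_iff.2 ⟨rfl, eq_off_a⟩⟩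
    have prod_eq_zero : ∏ b ∈ Finset.univ.erase a, (if x b = y b then (1 : ℂ) else 0) = 0 :=
      Finset.prod_eq_zero (Finset.mem_erase.2 ⟨hb, Finset.mem_univ b⟩) (if_neg hxy)
    rw [spinOp, Matrix.of_apply, prod_eq_zero, mul_zero, zero_mul]
  · have prod_eq_one : ∏ b ∈ Finset.univ.erase a,
        (if x b = Function.update x a i b then (1 : ℂ) else 0) = 1 :=
      Finset.prod_eq_one fun b hb ↦
        if_pos (Function.update_of_ne (Finset.ne_of_mem_erase hb) i x).symm
    rw [spinOp, Matrix.of_apply, prod_eq_one, mul_one, Function.update_self, Matrix.smul_apply,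
      smul_eq_mul]

theorem toLin'_totalSpin (d : ℕ) (ℓ : Fin 3) :
    Matrix.toLin' (totalSpin d ℓ) =
      (1 / 2 : ℂ) • tensorPowerAction (Fin d) (Fin 2) ℂ (pauli ℓ) := by
  simp only [totalSpin, map_sum, toLin'_spinOp, map_smul, tensorPowerAction_apply,
    Finset.smul_sum]

/-- The Cartan element `h = 2 L₃` of the `sl₂` triple acting on `(ℂ²)^{⊗d}`. -/
noncomputable def spinH (d : ℕ) : End ℂ ((Fin d → Fin 2) → ℂ) :=
  tensorPowerAction (Fin d) (Fin 2) ℂ (pauli 2)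

/-- The raising operator `e = L₁ + i L₂` of the `sl₂` triple acting on `(ℂ²)^{⊗d}`. -/
noncomputable def spinE (d : ℕ) : End ℂ ((Fin d → Fin 2) → ℂ) :=
  tensorPowerAction (Fin d) (Fin 2) ℂ (Matrix.single 0 1 1)

/-- The lowering operator `f = L₁ - i L₂` of the `sl₂` triple acting on `(ℂ²)^{⊗d}`. -/
noncomputable def spinF (d : ℕ) : End ℂ ((Fin d → Fin 2) → ℂ) :=
  tensorPowerAction (Fin d) (Fin 2) ℂ (Matrix.single 1 0 1)

theorem toLin'_totalSpin_zero (d : ℕ) :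
    Matrix.toLin' (totalSpin d 0) = (1 / 2 : ℂ) • (spinE d + spinF d) := by
  rw [toLin'_totalSpin, pauli_zero_eq, map_add, spinE, spinF]

theorem toLin'_totalSpin_one (d : ℕ) :
    Matrix.toLin' (totalSpin d 1) = (Complex.I / 2) • (spinF d - spinE d) := by
  rw [toLin'_totalSpin, pauli_one_eq, map_smul, map_sub, smul_smul, spinE, spinF,
    one_div_mul_eq_div]

theorem toLin'_totalSpin_two (d : ℕ) :
    Matrix.toLin' (totalSpin d 2) = (1 / 2 : ℂ) • spinH d :=
  toLin'_totalSpin d 2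

theorem sum_one_neg_one_apply {ι : Type*} [Fintype ι] (x : ι → Fin 2) :
    ∑ a, (![1, -1] : Fin 2 → ℂ) (x a) =
      Fintype.card ι - 2 * Finset.card {a | x a = 1} := by
  have entry_eq (i : Fin 2) : (![1, -1] : Fin 2 → ℂ) i = 1 - 2 * if i = 1 then 1 else 0 := by
    fin_cases i <;> norm_num
  simp only [entry_eq, Finset.sum_sub_distrib, ← Finset.mul_sum, Finset.sum_boole,
    Finset.sum_const, Finset.card_univ, nsmul_one]

theorem finrank_eigenspace_spinH (d : ℕ) (μ : ℂ) :
    finrank ℂ ((spinH d).eigenspace μ) =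
      Finset.card {x : Fin d → Fin 2 | (d : ℂ) - 2 * Finset.card {a | x a = 1} = μ} := by
  rw [spinH, pauli_two_eq, tensorPowerAction_diagonal, finrank_eigenspace_toLin'_diagonal]
  simp only [sum_one_neg_one_apply, Fintype.card_fin]

theorem finrank_eigenspace_spinH_sub (d j : ℕ) :
    finrank ℂ ((spinH d).eigenspace (d - 2 * j)) = d.choose j := by
  simp [finrank_eigenspace_spinH, card_filter_card_eq_one_eq_choose]

theorem finrank_eigenspace_spinH_add_two (d k : ℕ) :
    finrank ℂ ((spinH d).eigenspace (d - 2 * k + 2)) = if k = 0 then 0 else d.choose (k - 1) := by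
  rcases k with _ | j
  · rw [finrank_eigenspace_spinH, if_pos rfl, Finset.card_eq_zero, Finset.filter_eq_empty_iff]
    intro x _ hx
    refine Nat.cast_add_one_ne_zero (R := ℂ) (Finset.card {a | x a = 1}) ?_
    push_cast at hx
    linear_combination (-1 / 2 : ℂ) * hx
  · have weight_eq : (d - 2 * (j + 1 : ℕ) + 2 : ℂ) = d - 2 * j := by push_cast; ring
    rw [weight_eq, finrank_eigenspace_spinH_sub, if_neg j.succ_ne_zero, Nat.add_sub_cancel]

theorem spinH_ne_zero {d : ℕ} (hd : 1 ≤ d) : spinH d ≠ 0 := by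
  intro spinH_eq_zero
  have finrank_highest : finrank ℂ ((spinH d).eigenspace d) = 1 := by
    have finrank_sub_zero := finrank_eigenspace_spinH_sub d 0
    rwa [Nat.cast_zero, mul_zero, sub_zero, Nat.choose_zero_right] at finrank_sub_zero
  have eigenspace_eq_bot : (spinH d).eigenspace d = ⊥ := by
    have d_ne_zero : (d : ℂ) ≠ 0 := Nat.cast_ne_zero.2 (Nat.one_le_iff_ne_zero.1 hd)
    refine (Submodule.eq_bot_iff _).2 fun v hv ↦ ?_
    rw [End.mem_eigenspace_iff, spinH_eq_zero, LinearMap.zero_apply] at hv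
    exact (smul_eq_zero.1 hv.symm).resolve_left d_ne_zero
  rw [eigenspace_eq_bot, finrank_bot] at finrank_highest
  exact zero_ne_one finrank_highest

theorem lie_spinE_spinF (d : ℕ) : ⁅spinE d, spinF d⁆ = spinH d := by
  rw [spinE, spinF, ← LieHom.map_lie, isSl2Triple_pauli.lie_e_f, spinH]

theorem isSl2Triple_spin {d : ℕ} (hd : 1 ≤ d) : IsSl2Triple (spinH d) (spinE d) (spinF d) where
  h_ne_zero := spinH_ne_zero hd
  lie_e_f := lie_spinE_spinF d
  lie_h_e_nsmul := by
    rw [spinH, spinE, ← LieHom.map_lie, isSl2Triple_pauli.lie_h_e_nsmul, map_nsmul]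
  lie_h_f_nsmul := by
    rw [spinH, spinF, ← LieHom.map_lie, isSl2Triple_pauli.lie_h_f_nsmul, map_neg, map_nsmul]

theorem four_smul_toLin'_totalSpinSq (d : ℕ) :
    (4 : ℂ) • Matrix.toLin' (totalSpinSq d) = sl2Casimir (spinH d) (spinE d) (spinF d) := by
  have lie_e_f : spinE d * spinF d = spinH d + spinF d * spinE d :=
    sub_eq_iff_eq_add.1 (lie_spinE_spinF d)
  have I_half_sq : Complex.I / 2 * (Complex.I / 2) = -1 / 4 := by
    linear_combination (1 / 4 : ℂ) * Complex.I_mul_I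
  simp only [totalSpinSq, Fin.sum_univ_three, map_add, Matrix.toLin'_mul, ← End.mul_eq_comp,
    toLin'_totalSpin_zero, toLin'_totalSpin_one, toLin'_totalSpin_two, sl2Casimir,
    smul_mul_smul_comm, I_half_sq, mul_add, add_mul, mul_sub, sub_mul, lie_e_f]
  module

theorem spinEigenspace_eq_casimirWeightSpace (d : ℕ) (c₁ c₂ : ℂ) :
    spinEigenspace d c₁ c₂ =
      casimirWeightSpace (spinH d) (spinE d) (spinF d) (4 * c₁) (2 * c₂) := by
  have two_smul_totalSpin_two : (2 : ℂ) • Matrix.toLin' (totalSpin d 2) = spinH d := by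
    rw [toLin'_totalSpin_two, smul_smul, mul_one_div_cancel two_ne_zero, one_smul]
  have four_ne_zero : (4 : ℂ) ≠ 0 := by norm_num
  rw [casimirWeightSpace, ← four_smul_toLin'_totalSpinSq, ← two_smul_totalSpin_two]
  ext v
  simp only [spinEigenspace, Submodule.mem_inf, LinearMap.mem_ker, LinearMap.sub_apply,
    LinearMap.smul_apply, LinearMap.id_apply, sub_eq_zero, End.mem_eigenspace_iff, mul_smul,
    smul_right_inj four_ne_zero, smul_right_inj (two_ne_zero' ℂ)]

end Spin

/-- **Catalan-triangle dimension formula**: for `d ≥ 1`, integers `k, r` with `0 ≤ 2k ≤ d`,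
`0 ≤ r ≤ d − 2k`, set `l = (d − 2k)/2` and `m = l − r`.  Then
`dim V_{l(l+1), m} = C(d,k) − C(d,k−1)` (with `C(d,−1) = 0`). -/
theorem spinEigenspace_dim (d k r : ℕ) (hd : 1 ≤ d) (hk : 2 * k ≤ d) (hr : r ≤ d - 2 * k) :
    Module.finrank ℂ
      (spinEigenspace d
        ((((d : ℂ) - 2 * k) / 2) * ((((d : ℂ) - 2 * k) / 2) + 1))
        ((((d : ℂ) - 2 * k) / 2) - r))
    = d.choose k - (if k = 0 then 0 else d.choose (k - 1)) := by
  have cast_n : ((d - 2 * k : ℕ) : ℂ) = d - 2 * k := by push_cast [hk]; rfl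
  have casimir_eq (n : ℂ) : 4 * (n / 2 * (n / 2 + 1)) = n * (n + 2) := by ring
  have weight_eq (n : ℂ) : 2 * (n / 2 - r) = n - 2 * r := by ring
  have dim_add := finrank_casimirWeightSpace_add_finrank_eigenspace (isSl2Triple_spin hd) hr
  rw [cast_n, finrank_eigenspace_spinH_sub, finrank_eigenspace_spinH_add_two] at dim_add
  rw [spinEigenspace_eq_casimirWeightSpace, casimir_eq, weight_eq]
  exact Nat.eq_sub_of_add_eq dim_add
end
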